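/- arXiv:1701.01599 — 2 statements merged into one kernel-verified Lean document; each statement's English description precedes it below -/
import Mathlib

section
/- Let a, A, B, C be real numbers with 0 ≤ a ≤ 0.732 and A ≥ 0, B ≥ 0, C ≥ 0. Define g : ℝ → ℝ by g(x) = (1-x)(1-a+x)·A + ((1-x)²(1-a+x) + (1-x)(1-a+x)²)·B + (1-x)²(1-a+x)²·C. Then g is concave on the interval [0,a] and g(x) ≤ g(a/2) for every x with 0 ≤ x ≤ a. -/
/-!
In the centred variable `t = x - a / 2`, with `m = 1 - a / 2`, the product `(1 - x) * (1 - a + x)`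
equals `m ^ 2 - t ^ 2`, so the function is `(A + 2 m B) (m ^ 2 - t ^ 2) + C (m ^ 2 - t ^ 2) ^ 2`.

For weights `s + r = 1` and `w = s u + r v`, a function `f` satisfies
`s f(u) + r f(v) - f(w) = s r (u - v) ^ 2 f[u, v, w]`, where `f[u, v, w]` is the second divided
difference. That of `t ^ 2` is `1`, and that of `t ^ 4` is the complete homogeneous polynomial
`u ^ 2 + v ^ 2 + w ^ 2 + u v + u w + v w`, at most `6 (a / 2) ^ 2` when `|u|, |v|, |w| ≤ a / 2`.
Concavity thus reduces to `6 (a / 2) ^ 2 ≤ 2 m ^ 2`, i.e. `a ≤ √3 - 1 = 0.73205…`.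

The maximum at `a / 2` holds because `0 ≤ m ^ 2 - t ^ 2 ≤ m ^ 2` and the function is
nondecreasing in `m ^ 2 - t ^ 2`.
-/

/-- Bounds the second divided difference of `t ^ 4` at points of `[-a/2, a/2]`; this is the step
that forces a threshold on `a` close to `√3 - 1`. -/
lemma divided_difference_le {a u v w : ℝ} (ha0 : 0 ≤ a) (ha : a ≤ 0.732)
    (hu : |u| ≤ a / 2) (hv : |v| ≤ a / 2) (hw : |w| ≤ a / 2) :
    u ^ 2 + v ^ 2 + w ^ 2 + u * v + u * w + v * w ≤ 2 * (1 - a / 2) ^ 2 := by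
  have hu2 : u ^ 2 ≤ (a / 2) ^ 2 := sq_le_sq' (abs_le.1 hu).1 (abs_le.1 hu).2
  have hv2 : v ^ 2 ≤ (a / 2) ^ 2 := sq_le_sq' (abs_le.1 hv).1 (abs_le.1 hv).2
  have hw2 : w ^ 2 ≤ (a / 2) ^ 2 := sq_le_sq' (abs_le.1 hw).1 (abs_le.1 hw).2
  have key : 6 * (a / 2) ^ 2 ≤ 2 * (1 - a / 2) ^ 2 := by
    norm_num at ha
    nlinarith
  nlinarith [sq_nonneg (u - v), sq_nonneg (u - w), sq_nonneg (v - w)]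

theorem concave_max_small_a (a A B C : ℝ) (ha0 : 0 ≤ a) (ha : a ≤ 0.732)
    (hA : 0 ≤ A) (hB : 0 ≤ B) (hC : 0 ≤ C) :
    ConcaveOn ℝ (Set.Icc 0 a)
      (fun x : ℝ => (1 - x) * (1 - a + x) * A +
        ((1 - x) ^ 2 * (1 - a + x) + (1 - x) * (1 - a + x) ^ 2) * B +
        (1 - x) ^ 2 * (1 - a + x) ^ 2 * C) ∧
    ∀ x : ℝ, 0 ≤ x → x ≤ a →
      (1 - x) * (1 - a + x) * A +
        ((1 - x) ^ 2 * (1 - a + x) + (1 - x) * (1 - a + x) ^ 2) * B +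
        (1 - x) ^ 2 * (1 - a + x) ^ 2 * C ≤
      (1 - a / 2) * (1 - a + a / 2) * A +
        ((1 - a / 2) ^ 2 * (1 - a + a / 2) + (1 - a / 2) * (1 - a + a / 2) ^ 2) * B +
        (1 - a / 2) ^ 2 * (1 - a + a / 2) ^ 2 * C := by
  constructor
  · refine ⟨convex_Icc 0 a, ?_⟩
    intro x hx y hy s r hs hr hsr
    have hz := convex_Icc 0 a hx hy hs hr hsr
    simp only [smul_eq_mul] at hz ⊢
    obtain rfl : r = 1 - s := by linarith
    have centred : ∀ t ∈ Set.Icc 0 a, |t - a / 2| ≤ a / 2 := fun t ht =>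
      abs_le.2 ⟨by linarith [ht.1], by linarith [ht.2]⟩
    have hd := divided_difference_le ha0 ha (centred x hx) (centred y hy) (centred _ hz)
    have hm : 0 ≤ 2 - a := by norm_num at ha; linarith
    have hgap := mul_nonneg (mul_nonneg (mul_nonneg hs hr) (sq_nonneg (x - y)))
      (add_nonneg (add_nonneg hA (mul_nonneg hm hB)) (mul_nonneg hC (sub_nonneg.2 hd)))
    -- `hgap` is exactly the concavity gap, by the divided-difference identity.
    linear_combination hgap
  · intro x hx0 hxa
    have ha1 : a ≤ 1 := by norm_num at ha; linarith
    have hm : 0 ≤ 2 - a := by linarith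
    have hq0 : 0 ≤ (1 - x) * (1 - a + x) := mul_nonneg (by linarith) (by linarith)
    have hq : (1 - x) * (1 - a + x) ≤ (1 - a / 2) ^ 2 := by
      linear_combination sq_nonneg (x - a / 2)
    have hq2 := pow_le_pow_left₀ hq0 hq 2
    linear_combination mul_le_mul_of_nonneg_right hq (add_nonneg hA (mul_nonneg hm hB)) +
      mul_le_mul_of_nonneg_right hq2 hC
end

section
/- For every real number x > 1, x/(1 - exp(1-x)) - x/2 > 1.9532. -/
/-!
Put `E = exp (1 - x)` and `c = 1.9532`. Clearing the positive denominator `1 - E`, the claim reads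
`φ(x) := (2c + x) E + x - 2c > 0`, which is clear for `x ≥ 2c`. For `1 < x < 2c`, write
`x = x₀ + t` with `x₀ = 2.72912`, very close to the minimizer of `φ`, and bound
`E = exp (1 - x₀) exp (-t)` from below by `0.17744 (1 - t + t²/2 - t³/6)`, using a numerical
estimate of `exp (1 - x₀)` and the fact that odd-degree Taylor polynomials lie below `exp` on the
whole line. What remains is a quartic in `t` whose constant term is positive, whose linear
coefficient is tiny, and whose quadratic part dominates the rest on the range of `t`.
-/

/-- The cubic Taylor polynomial of `exp` at `0` is a lower bound on the negative side too. -/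
lemma cubic_le_exp (s : ℝ) : 1 + s + s ^ 2 / 2 + s ^ 3 / 6 ≤ Real.exp s := by
  rcases le_total 0 s with hs | hs
  · have h := Real.sum_le_exp_of_nonneg hs 4
    norm_num [Finset.sum_range_succ, Nat.factorial] at h
    linarith
  · -- With `T` the cubic, `T(u) exp (-u)` has derivative `-u³/6 * exp (-u)`, so it increases
    -- up to the value `1` at `u = 0`.
    have hd : ∀ u : ℝ, HasDerivAt
        (fun u : ℝ => (1 + u + u ^ 2 / 2 + u ^ 3 / 6) * Real.exp (-u))
        (-(u ^ 3 / 6) * Real.exp (-u)) u := by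
      intro u
      have h1 : HasDerivAt (fun u : ℝ => 1 + u + u ^ 2 / 2 + u ^ 3 / 6)
          (1 + u + u ^ 2 / 2) u := by
        have := (((hasDerivAt_id u).const_add 1).add ((hasDerivAt_pow 2 u).div_const 2)).add
          ((hasDerivAt_pow 3 u).div_const 6)
        refine this.congr_deriv ?_
        norm_num
        ring
      refine (h1.mul (hasDerivAt_neg u).exp).congr_deriv ?_
      ring
    have hmono : MonotoneOn
        (fun u : ℝ => (1 + u + u ^ 2 / 2 + u ^ 3 / 6) * Real.exp (-u)) (Set.Iic 0) := by
      refine monotoneOn_of_deriv_nonneg (convex_Iic 0)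
        (fun u _ => (hd u).continuousAt.continuousWithinAt)
        (fun u _ => (hd u).differentiableAt.differentiableWithinAt) ?_
      intro u hu
      rw [interior_Iic, Set.mem_Iio] at hu
      rw [(hd u).deriv]
      have : u ^ 3 < 0 := Odd.pow_neg (by decide) hu
      exact mul_nonneg (by linarith) (Real.exp_pos _).le
    have h := hmono hs (Set.mem_Iic.2 le_rfl) hs
    simp only [Real.exp_neg] at h
    rw [← div_eq_mul_inv, div_le_iff₀ (Real.exp_pos s)] at h
    simpa using h

lemma exp_neg_lower : (0.17744 : ℝ) ≤ Real.exp (-1.72912) := by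
  have h := Real.exp_bound' (x := 0.86456) (by norm_num) (by norm_num) (n := 12) (by norm_num)
  have h1 : Real.exp 0.86456 ≤ 2.373962 := h.trans (by
    norm_num [Finset.sum_range_succ, Nat.factorial])
  have h2 : Real.exp 1.72912 ≤ 2.373962 ^ 2 := by
    rw [show (1.72912 : ℝ) = 0.86456 + 0.86456 by norm_num, Real.exp_add, ← sq]
    gcongr
  rw [Real.exp_neg, le_inv_comm₀ (by norm_num) (Real.exp_pos _)]
  exact h2.trans (by norm_num)

theorem f_lower_bound (x : ℝ) (hx : 1 < x) :
    x / (1 - Real.exp (1 - x)) - x / 2 > 1.9532 := by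
  have hE1 : Real.exp (1 - x) < 1 := Real.exp_lt_one_iff.2 (by linarith)
  have hE0 := Real.exp_pos (1 - x)
  have key : 0 < (3.9064 + x) * Real.exp (1 - x) + x - 3.9064 := by
    rcases le_or_gt 3.9064 x with h | h
    · have : 0 < (3.9064 + x) * Real.exp (1 - x) := by positivity
      linarith
    · obtain ⟨t, rfl⟩ : ∃ t, x = 2.72912 + t := ⟨x - 2.72912, by ring⟩
      have hE : 0.17744 * (1 - t + t ^ 2 / 2 - t ^ 3 / 6) ≤ Real.exp (1 - (2.72912 + t)) := by
        rw [show 1 - (2.72912 + t) = -1.72912 + -t by ring, Real.exp_add]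
        calc 0.17744 * (1 - t + t ^ 2 / 2 - t ^ 3 / 6)
            = 0.17744 * (1 + -t + (-t) ^ 2 / 2 + (-t) ^ 3 / 6) := by ring
          _ ≤ 0.17744 * Real.exp (-t) := by gcongr; exact cubic_le_exp _
          _ ≤ _ := by gcongr; exact exp_neg_lower
      have ht1 : -1.73 < t := by linarith
      have ht2 : t < 1.18 := by linarith
      have hmul := mul_le_mul_of_nonneg_left hE (show 0 ≤ 3.9064 + (2.72912 + t) by linarith)
      -- The quadratic, cubic and quartic terms together are `0.17744 t²` times this factor.
      have hq : 1 ≤ 2.31776 - 0.60592 * t - t ^ 2 / 6 := by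
        nlinarith [mul_pos (sub_pos.2 ht1) (sub_pos.2 ht2)]
      have hq2 := mul_le_mul_of_nonneg_left hq (sq_nonneg t)
      nlinarith [sq_nonneg (t + 1 / 1000)]
  have hden : 0 < 1 - Real.exp (1 - x) := by linarith
  have : 1.9532 + x / 2 < x / (1 - Real.exp (1 - x)) := by
    rw [lt_div_iff₀ hden]
    nlinarith
  linarith
end
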